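/- Let α and β be real numbers with 0 < α < 1 and 0 < β < 1. For real y > 2, define F(y) as the value of the continued fraction y/2 + K_{m=1}^∞(a_m/b_m(y)), where for m ≥ 1: a_{2m} = (2m−α−β)(2m−1+α)(2m−1+β)/4, a_{2m−1} = (2m−2+α+β)(2m−1−α)(2m−1−β)/4, b_{2m}(y) = y, b_{2m−1}(y) = (2m−1)y. Then for every real x > 2, the continued fractions defining F(x) and F(x+2) converge to positive real values, and F(x)/F(x+2) = (x+1−α)(x+α+β)(x+1−β) / [(x+1+α)(x+2−α−β)(x+1+β)]. -/

import Mathlib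

open Filter

noncomputable def cfA (a b : ℕ → ℝ) : ℕ → ℝ
  | 0 => 1
  | 1 => b 0
  | n + 2 => b (n + 1) * cfA a b (n + 1) + a (n + 1) * cfA a b n

noncomputable def cfB (a b : ℕ → ℝ) : ℕ → ℝ
  | 0 => 0
  | 1 => 1
  | n + 2 => b (n + 1) * cfB a b (n + 1) + a (n + 1) * cfB a b n

/-- The continued fraction `b 0 + K_{n=1}^∞ (a n / b n)` converges to `v`. -/
def CFConvergesTo (a b : ℕ → ℝ) (v : ℝ) : Prop :=
  (∀ᶠ n in atTop, cfB a b n ≠ 0) ∧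
    Tendsto (fun n => cfA a b n / cfB a b n) atTop (nhds v)
/-- `a_{2m} = (2m−α−β)(2m−1+α)(2m−1+β)/4`, `a_{2m−1} = (2m−2+α+β)(2m−1−α)(2m−1−β)/4`. -/
noncomputable def aSeq (α β : ℝ) : ℕ → ℝ := fun n =>
  if n % 2 = 0 then
    ((n : ℝ) - α - β) * ((n : ℝ) - 1 + α) * ((n : ℝ) - 1 + β) / 4
  else
    ((n : ℝ) - 1 + α + β) * ((n : ℝ) - α) * ((n : ℝ) - β) / 4

/-- `b_0 = y/2`, `b_{2m}(y) = y`, `b_{2m−1}(y) = (2m−1)y`. -/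
noncomputable def bSeq (y : ℝ) : ℕ → ℝ := fun n =>
  if n = 0 then y / 2 else if n % 2 = 0 then y else (n : ℝ) * y

/-! Write `A n / B n` and `A' n / B' n` for the convergents of the fractions at `x` and at `x + 2`
and `num / den` for the claimed quotient of their values. A contiguity relation expresses
`den * A n` through `A' n` and `A' (n + 1)`, and `num * B n` through `B' n` and `B' (n + 1)`, with
the same coefficients. By the determinant formula, `den * (A n / B n) - num * (A' n / B' n)` is
therefore `(-1) ^ n` times a nonnegative number. As both fractions converge, this difference has a
limit, and a convergent sequence of alternating sign tends to `0`.

Convergence holds for every continued fraction with positive elements such that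
`∑ √(b n * b (n + 1) / a (n + 1)) = ∞`: the reciprocals of the gaps between consecutive convergents
increase, and by the inequality between arithmetic and geometric means they grow at least like the
partial sums of that series. So the convergents are the partial sums of an alternating series whose
terms decrease to `0`. -/

open scoped Topology

/-- `X` solves the recurrence of the canonical numerators and denominators of
`b 0 + K (a n / b n)`; as for `cfA` and `cfB`, the index is one more than the classical one. -/
def IsThreeTermSolution {R : Type*} [Semiring R] (a b X : ℕ → R) : Prop :=
  ∀ n, X (n + 2) = b (n + 1) * X (n + 1) + a (n + 1) * X n

namespace IsThreeTermSolution

theorem const_mul {R : Type*} [CommSemiring R] {a b X : ℕ → R} (hX : IsThreeTermSolution a b X)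
    (c : R) : IsThreeTermSolution a b fun n => c * X n := fun n => by
  simp only [hX n]
  ring

theorem ext {R : Type*} [Semiring R] {a b X Y : ℕ → R} (hX : IsThreeTermSolution a b X)
    (hY : IsThreeTermSolution a b Y) (h0 : X 0 = Y 0) (h1 : X 1 = Y 1) (n : ℕ) : X n = Y n := by
  induction n using Nat.twoStepInduction with
  | zero => exact h0
  | one => exact h1
  | more n ih ih' => rw [hX n, hY n, ih, ih']

theorem casoratian_eq {R : Type*} [CommRing R] {a b X Y : ℕ → R}
    (hX : IsThreeTermSolution a b X) (hY : IsThreeTermSolution a b Y) (n : ℕ) :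
    X (n + 1) * Y n - X n * Y (n + 1) =
      (-1) ^ n * (∏ i ∈ Finset.range n, a (i + 1)) * (X 1 * Y 0 - X 0 * Y 1) := by
  induction n with
  | zero => simp
  | succ n ih =>
    rw [hX n, hY n, Finset.prod_range_succ, pow_succ]
    linear_combination -a (n + 1) * ih

end IsThreeTermSolution

theorem isThreeTermSolution_cfA (a b : ℕ → ℝ) : IsThreeTermSolution a b (cfA a b) := fun _ => rfl

theorem isThreeTermSolution_cfB (a b : ℕ → ℝ) : IsThreeTermSolution a b (cfB a b) := fun _ => rfl

theorem cf_determinant (a b : ℕ → ℝ) (n : ℕ) :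
    cfA a b (n + 1) * cfB a b n - cfA a b n * cfB a b (n + 1) =
      -((-1) ^ n * ∏ i ∈ Finset.range n, a (i + 1)) := by
  rw [(isThreeTermSolution_cfA a b).casoratian_eq (isThreeTermSolution_cfB a b)]
  simp [cfA, cfB]

/-- The reciprocal of the distance between the consecutive convergents `cfA n / cfB n` and
`cfA (n + 1) / cfB (n + 1)` of a continued fraction with positive elements; it is `0` for `n = 0`,
where the first of these is `∞`. -/
noncomputable def cfInvGap (a b : ℕ → ℝ) (n : ℕ) : ℝ :=
  cfB a b n * cfB a b (n + 1) / ∏ i ∈ Finset.range n, a (i + 1)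

section PositiveElements

variable {a b : ℕ → ℝ}

theorem prod_partialNumerators_pos (ha : ∀ n, 0 < a (n + 1)) (n : ℕ) :
    0 < ∏ i ∈ Finset.range n, a (i + 1) :=
  Finset.prod_pos fun i _ => ha i

theorem cfB_succ_pos (ha : ∀ n, 0 < a (n + 1)) (hb : ∀ n, 0 < b (n + 1)) (n : ℕ) :
    0 < cfB a b (n + 1) := by
  induction n using Nat.twoStepInduction with
  | zero => simp [cfB]
  | one => simpa [cfB] using hb 0
  | more n ih ih' =>
    rw [isThreeTermSolution_cfB a b (n + 1)]
    exact add_pos (mul_pos (hb _) ih') (mul_pos (ha _) ih)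

theorem cfInvGap_succ_pos (ha : ∀ n, 0 < a (n + 1)) (hb : ∀ n, 0 < b (n + 1)) (n : ℕ) :
    0 < cfInvGap a b (n + 1) :=
  div_pos (mul_pos (cfB_succ_pos ha hb n) (cfB_succ_pos ha hb (n + 1)))
    (prod_partialNumerators_pos ha _)

theorem convergent_succ_eq (ha : ∀ n, 0 < a (n + 1)) (hb : ∀ n, 0 < b (n + 1)) (n : ℕ) :
    cfA a b (n + 2) / cfB a b (n + 2) =
      cfA a b (n + 1) / cfB a b (n + 1) + (-1) ^ n * (cfInvGap a b (n + 1))⁻¹ := by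
  have hB := cfB_succ_pos ha hb n
  have hB' := cfB_succ_pos ha hb (n + 1)
  have hdet := cf_determinant a b (n + 1)
  rw [pow_succ] at hdet
  rw [cfInvGap, inv_div]
  field_simp
  linear_combination hdet

theorem convergent_eq_sum (ha : ∀ n, 0 < a (n + 1)) (hb : ∀ n, 0 < b (n + 1)) (n : ℕ) :
    cfA a b (n + 1) / cfB a b (n + 1) =
      b 0 + ∑ i ∈ Finset.range n, (-1) ^ i * (cfInvGap a b (i + 1))⁻¹ := by
  induction n with
  | zero => simp [cfA, cfB]
  | succ n ih => rw [convergent_succ_eq ha hb, ih, Finset.sum_range_succ, add_assoc]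

theorem cfInvGap_succ (ha : ∀ n, 0 < a (n + 1)) (n : ℕ) :
    cfInvGap a b (n + 1) = cfInvGap a b n +
      b (n + 1) * cfB a b (n + 1) ^ 2 / ∏ i ∈ Finset.range (n + 1), a (i + 1) := by
  have hP := prod_partialNumerators_pos ha n
  have ha' := ha n
  rw [cfInvGap, cfInvGap, isThreeTermSolution_cfB a b n, Finset.prod_range_succ]
  field_simp
  ring

theorem monotone_cfInvGap (ha : ∀ n, 0 < a (n + 1)) (hb : ∀ n, 0 < b (n + 1)) :
    Monotone (cfInvGap a b) := by
  refine monotone_nat_of_le_succ fun n => ?_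
  rw [cfInvGap_succ ha]
  have hP := prod_partialNumerators_pos ha (n + 1)
  have hb' := hb n
  exact le_add_of_nonneg_right (by positivity)

theorem cfInvGap_add_le (ha : ∀ n, 0 < a (n + 1)) (hb : ∀ n, 0 < b (n + 1)) (n : ℕ) :
    cfInvGap a b n + 2 * (√(b (n + 1) * b (n + 2) / a (n + 2)) * cfInvGap a b (n + 1)) ≤
      cfInvGap a b (n + 2) := by
  have hP := prod_partialNumerators_pos ha (n + 1)
  have hP' := prod_partialNumerators_pos ha (n + 2)
  have ha' := ha (n + 1)
  have hb₁ := hb n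
  have hb₂ := hb (n + 1)
  have hD := cfInvGap_succ_pos ha hb n
  set u := b (n + 1) * cfB a b (n + 1) ^ 2 / ∏ i ∈ Finset.range (n + 1), a (i + 1) with hu
  set v := b (n + 2) * cfB a b (n + 2) ^ 2 / ∏ i ∈ Finset.range (n + 2), a (i + 1) with hv
  have hstep : cfInvGap a b (n + 1) = cfInvGap a b n + u := cfInvGap_succ ha n
  have hstep' : cfInvGap a b (n + 2) = cfInvGap a b (n + 1) + v := cfInvGap_succ ha (n + 1)
  have hu0 : 0 ≤ u := by positivity
  have hv0 : 0 ≤ v := by positivity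
  have huv : b (n + 1) * b (n + 2) / a (n + 2) * cfInvGap a b (n + 1) ^ 2 = u * v := by
    rw [hu, hv, cfInvGap, Finset.prod_range_succ _ (n + 1)]
    field_simp
  have hsqrt : √(b (n + 1) * b (n + 2) / a (n + 2)) * cfInvGap a b (n + 1) = √u * √v := by
    rw [← Real.sqrt_mul hu0, ← huv, Real.sqrt_mul (by positivity), Real.sqrt_sq hD.le]
  have hamgm := two_mul_le_add_sq √u √v
  rw [Real.sq_sqrt hu0, Real.sq_sqrt hv0] at hamgm
  linarith

theorem cfInvGap_one_mul_sum_le (ha : ∀ n, 0 < a (n + 1)) (hb : ∀ n, 0 < b (n + 1)) (n : ℕ) :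
    cfInvGap a b 1 * ∑ i ∈ Finset.range n, √(b (i + 1) * b (i + 2) / a (i + 2)) ≤
      cfInvGap a b (n + 1) := by
  have hmono := monotone_cfInvGap ha hb
  suffices 2 * (cfInvGap a b 1 * ∑ i ∈ Finset.range n, √(b (i + 1) * b (i + 2) / a (i + 2))) ≤
      cfInvGap a b n + cfInvGap a b (n + 1) by linarith [hmono n.le_succ]
  induction n with
  | zero => simpa [cfInvGap, cfB] using (cfInvGap_succ_pos ha hb 0).le
  | succ n ih =>
    have hD : cfInvGap a b 1 ≤ cfInvGap a b (n + 1) := hmono n.succ_pos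
    have hterm := mul_le_mul_of_nonneg_left hD
      (Real.sqrt_nonneg (b (n + 1) * b (n + 2) / a (n + 2)))
    rw [Finset.sum_range_succ]
    linarith [cfInvGap_add_le ha hb n]

theorem tendsto_cfInvGap_atTop (ha : ∀ n, 0 < a (n + 1)) (hb : ∀ n, 0 < b (n + 1))
    (hdiv : ¬Summable fun n => √(b (n + 1) * b (n + 2) / a (n + 2))) :
    Tendsto (fun n => cfInvGap a b (n + 1)) atTop atTop := by
  rw [not_summable_iff_tendsto_nat_atTop_of_nonneg fun _ => Real.sqrt_nonneg _] at hdiv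
  exact tendsto_atTop_mono (cfInvGap_one_mul_sum_le ha hb)
    (hdiv.const_mul_atTop (cfInvGap_succ_pos ha hb 0))

theorem exists_cfConvergesTo_of_not_summable (ha : ∀ n, 0 < a (n + 1)) (hb : ∀ n, 0 < b (n + 1))
    (hdiv : ¬Summable fun n => √(b (n + 1) * b (n + 2) / a (n + 2))) :
    ∃ v, CFConvergesTo a b v ∧ b 0 ≤ v := by
  have hanti : Antitone fun n => (cfInvGap a b (n + 1))⁻¹ := fun m n hmn =>
    inv_anti₀ (cfInvGap_succ_pos ha hb m) (monotone_cfInvGap ha hb (Nat.succ_le_succ hmn))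
  obtain ⟨l, hl⟩ := hanti.tendsto_alternating_series_of_tendsto_zero
    (tendsto_cfInvGap_atTop ha hb hdiv).inv_tendsto_atTop
  have hl0 : 0 ≤ l := by simpa using hanti.alternating_series_le_tendsto hl 0
  refine ⟨b 0 + l, ⟨?_, ?_⟩, le_add_of_nonneg_right hl0⟩
  · filter_upwards [eventually_ge_atTop 1] with n hn
    obtain ⟨m, rfl⟩ := Nat.exists_eq_add_of_le' hn
    exact (cfB_succ_pos ha hb m).ne'
  · rw [← tendsto_add_atTop_iff_nat 1]
    simpa only [convergent_eq_sum ha hb] using hl.const_add (b 0)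

end PositiveElements

theorem eq_zero_of_tendsto_of_alternating {R : Type*} [Ring R] [PartialOrder R]
    [IsOrderedAddMonoid R] [TopologicalSpace R] [OrderClosedTopology R] {u : ℕ → R} {l : R}
    (hu : Tendsto u atTop (𝓝 l)) (hsign : ∀ n, 0 ≤ (-1) ^ n * u n) : l = 0 := by
  refine le_antisymm (le_of_tendsto_of_frequently hu ?_) (ge_of_tendsto_of_frequently hu ?_)
  · exact Nat.frequently_odd.mono fun n hn => by simpa [hn.neg_one_pow] using hsign n
  · exact Nat.frequently_even.mono fun n hn => by simpa [hn.neg_one_pow] using hsign n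

theorem mul_mul_le_pow_three {R : Type*} [CommRing R] [LinearOrder R] [IsStrictOrderedRing R]
    {u v w s : R} (hu : 0 ≤ u) (hv : 0 ≤ v) (hw : 0 ≤ w) (hs : u + v + w ≤ 3 * s) :
    u * v * w ≤ s ^ 3 := by
  have hmean : 27 * (u * v * w) ≤ (u + v + w) ^ 3 := by
    nlinarith [mul_nonneg hu (sq_nonneg (v - w)), mul_nonneg hv (sq_nonneg (u - w)),
      mul_nonneg hw (sq_nonneg (u - v)), mul_nonneg (add_nonneg (add_nonneg hu hv) hw)
        (add_nonneg (add_nonneg (sq_nonneg (u - v)) (sq_nonneg (v - w))) (sq_nonneg (u - w)))]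
  have hcube : (u + v + w) ^ 3 ≤ (3 * s) ^ 3 := by gcongr
  linarith [mul_pow 3 s 3]

section Elements

variable {α β y : ℝ}

theorem aSeq_two_mul (α β : ℝ) (k : ℕ) :
    aSeq α β (2 * k) = (2 * k - α - β) * (2 * k - 1 + α) * (2 * k - 1 + β) / 4 := by
  simp [aSeq]

theorem aSeq_two_mul_add_one (α β : ℝ) (k : ℕ) :
    aSeq α β (2 * k + 1) = (2 * k + α + β) * (2 * k + 1 - α) * (2 * k + 1 - β) / 4 := by
  simp [aSeq, Nat.add_mod]

theorem bSeq_zero (y : ℝ) : bSeq y 0 = y / 2 := by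
  simp [bSeq]

theorem bSeq_two_mul_add_two (y : ℝ) (k : ℕ) : bSeq y (2 * k + 2) = y := by
  simp [bSeq]

theorem bSeq_two_mul_add_one (y : ℝ) (k : ℕ) : bSeq y (2 * k + 1) = (2 * k + 1) * y := by
  simp [bSeq, Nat.add_mod]

theorem aSeq_succ_pos (hα : α < 1) (hβ : β < 1) (hαβ : 0 < α + β) (n : ℕ) :
    0 < aSeq α β (n + 1) := by
  obtain ⟨k, rfl | rfl⟩ := n.even_or_odd'
  · have : (0 : ℝ) ≤ k := k.cast_nonneg
    rw [aSeq_two_mul_add_one]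
    refine div_pos (mul_pos (mul_pos ?_ ?_) ?_) four_pos <;> linarith
  · have : (0 : ℝ) ≤ k := k.cast_nonneg
    rw [show 2 * k + 1 + 1 = 2 * (k + 1) by ring, aSeq_two_mul]
    push_cast
    refine div_pos (mul_pos (mul_pos ?_ ?_) ?_) four_pos <;> linarith

theorem aSeq_succ_le (hα : α < 1) (hβ : β < 1) (hαβ : 0 < α + β) (n : ℕ) :
    aSeq α β (n + 1) ≤ ((n : ℝ) + 1) ^ 3 / 4 := by
  obtain ⟨k, rfl | rfl⟩ := n.even_or_odd'
  · have : (0 : ℝ) ≤ k := k.cast_nonneg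
    rw [aSeq_two_mul_add_one]
    push_cast
    gcongr
    apply mul_mul_le_pow_three <;> linarith
  · have : (0 : ℝ) ≤ k := k.cast_nonneg
    rw [show 2 * k + 1 + 1 = 2 * (k + 1) by ring, aSeq_two_mul]
    push_cast
    gcongr
    apply mul_mul_le_pow_three <;> linarith

theorem bSeq_succ_pos (hy : 0 < y) (n : ℕ) : 0 < bSeq y (n + 1) := by
  obtain ⟨k, rfl | rfl⟩ := n.even_or_odd'
  · rw [bSeq_two_mul_add_one]
    positivity
  · rwa [bSeq_two_mul_add_two]

theorem mul_sq_le_bSeq_mul_bSeq (y : ℝ) (n : ℕ) :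
    (n + 1) * y ^ 2 ≤ bSeq y (n + 1) * bSeq y (n + 2) := by
  obtain ⟨k, rfl | rfl⟩ := n.even_or_odd'
  · rw [bSeq_two_mul_add_one, bSeq_two_mul_add_two]
    push_cast
    exact le_of_eq (by ring)
  · rw [bSeq_two_mul_add_two, show 2 * k + 1 + 2 = 2 * (k + 1) + 1 by ring, bSeq_two_mul_add_one]
    push_cast
    linarith [sq_nonneg y]

theorem div_le_sqrt_bSeq_mul_bSeq_div_aSeq (hα : α < 1) (hβ : β < 1) (hαβ : 0 < α + β)
    (y : ℝ) (n : ℕ) :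
    2 * y / (n + 3) ≤ √(bSeq y (n + 1) * bSeq y (n + 2) / aSeq α β (n + 2)) := by
  have ha : aSeq α β (n + 2) ≤ ((n : ℝ) + 2) ^ 3 / 4 := by
    convert aSeq_succ_le hα hβ hαβ (n + 1) using 2
    push_cast
    ring
  apply Real.le_sqrt_of_sq_le
  rw [le_div_iff₀ (aSeq_succ_pos hα hβ hαβ (n + 1))]
  calc (2 * y / (n + 3)) ^ 2 * aSeq α β (n + 2)
      ≤ (2 * y / (n + 3)) ^ 2 * (((n : ℝ) + 2) ^ 3 / 4) := by gcongr
    _ = ((n : ℝ) + 2) ^ 3 / (n + 3) ^ 2 * y ^ 2 := by field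
    _ ≤ (n + 1) * y ^ 2 := by
        gcongr
        rw [div_le_iff₀ (by positivity)]
        nlinarith [(n.cast_nonneg : (0 : ℝ) ≤ n)]
    _ ≤ bSeq y (n + 1) * bSeq y (n + 2) := mul_sq_le_bSeq_mul_bSeq y n

theorem not_summable_sqrt_bSeq_mul_bSeq_div_aSeq (hα : α < 1) (hβ : β < 1) (hαβ : 0 < α + β)
    (hy : 0 < y) :
    ¬Summable fun n => √(bSeq y (n + 1) * bSeq y (n + 2) / aSeq α β (n + 2)) := by
  intro hsum
  have hharmonic : Summable fun n : ℕ => 2 * y * (1 / ((n + 3 : ℕ) : ℝ)) := by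
    refine hsum.of_nonneg_of_le (fun n => by positivity) fun n => ?_
    simpa [div_eq_mul_inv] using div_le_sqrt_bSeq_mul_bSeq_div_aSeq hα hβ hαβ y n
  rw [summable_mul_left_iff (by positivity),
    summable_nat_add_iff (f := fun n : ℕ => 1 / (n : ℝ)) 3] at hharmonic
  exact Real.not_summable_one_div_natCast hharmonic

theorem exists_pos_cfConvergesTo_aSeq_bSeq (hα : α < 1) (hβ : β < 1) (hαβ : 0 < α + β)
    (hy : 0 < y) : ∃ v, CFConvergesTo (aSeq α β) (bSeq y) v ∧ 0 < v := by
  obtain ⟨v, hv, hbv⟩ := exists_cfConvergesTo_of_not_summable (aSeq_succ_pos hα hβ hαβ)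
    (bSeq_succ_pos hy) (not_summable_sqrt_bSeq_mul_bSeq_div_aSeq hα hβ hαβ hy)
  rw [bSeq_zero] at hbv
  exact ⟨v, hv, by linarith⟩

end Elements

/-- The numerator of the quotient of the values at `y` and `y + 2`. -/
noncomputable def shiftNum (α β y : ℝ) : ℝ :=
  (y + 1 - α) * (y + α + β) * (y + 1 - β)

/-- The denominator of the quotient of the values at `y` and `y + 2`. -/
noncomputable def shiftDen (α β y : ℝ) : ℝ :=
  (y + 1 + α) * (y + 2 - α - β) * (y + 1 + β)

/-- The weight of `X (n + 1)` in the contiguity relation `contiguousSeq`, up to sign. -/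
noncomputable def contiguityCoeff (y : ℝ) (n : ℕ) : ℝ :=
  4 * (y + 1) * if n % 2 = 0 then (n : ℝ) else 1

/-- The contiguity relation of the family: it turns a solution `X` of the three-term recurrence at
`y + 2` into a solution of the recurrence at `y`. It is scaled so that it maps canonical numerators
to `shiftDen` times canonical numerators, and canonical denominators to `shiftNum` times canonical
denominators. -/
noncomputable def contiguousSeq (α β y : ℝ) (X : ℕ → ℝ) (n : ℕ) : ℝ :=
  (if n % 2 = 0 then shiftDen α β y + 2 * (y + 1) * n * (n + y + 2)
    else shiftNum α β y + 2 * (y + 1) * (n + 1) * (n + y + 1)) * X n -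
    contiguityCoeff y n * X (n + 1)

section Contiguity

variable {α β y : ℝ}

theorem shiftDen_pos (hα : α < 1) (hβ : β < 1) (hαβ : 0 < α + β) (hy : 0 < y) :
    0 < shiftDen α β y :=
  mul_pos (mul_pos (by linarith) (by linarith)) (by linarith)

theorem contiguityCoeff_nonneg (hy : -1 ≤ y) (n : ℕ) : 0 ≤ contiguityCoeff y n := by
  have hy' : 0 ≤ y + 1 := by linarith
  unfold contiguityCoeff
  split_ifs <;> positivity

theorem contiguousSeq_two_mul (α β y : ℝ) (X : ℕ → ℝ) (k : ℕ) :
    contiguousSeq α β y X (2 * k) =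
      (shiftDen α β y + 4 * (y + 1) * k * (2 * k + y + 2)) * X (2 * k) -
        8 * (y + 1) * k * X (2 * k + 1) := by
  simp only [contiguousSeq, contiguityCoeff, Nat.mul_mod_right, if_true]
  push_cast
  ring

theorem contiguousSeq_two_mul_add_one (α β y : ℝ) (X : ℕ → ℝ) (k : ℕ) :
    contiguousSeq α β y X (2 * k + 1) =
      (shiftNum α β y + 4 * (y + 1) * (k + 1) * (2 * k + y + 2)) * X (2 * k + 1) -
        4 * (y + 1) * X (2 * k + 2) := by
  simp only [contiguousSeq, contiguityCoeff, Nat.mul_add_mod, Nat.one_mod, one_ne_zero, if_false]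
  push_cast
  ring

theorem isThreeTermSolution_contiguousSeq {X : ℕ → ℝ}
    (hX : IsThreeTermSolution (aSeq α β) (bSeq (y + 2)) X) :
    IsThreeTermSolution (aSeq α β) (bSeq y) (contiguousSeq α β y X) := by
  intro n
  have h₀ := hX n
  have h₁ := hX (n + 1)
  obtain ⟨k, rfl | rfl⟩ := n.even_or_odd'
  · have hY := contiguousSeq_two_mul α β y X (k + 1)
    have ha := aSeq_two_mul α β (k + 1)
    simp only [Nat.mul_add, Nat.mul_one, add_assoc, Nat.reduceAdd] at *
    rw [hY, contiguousSeq_two_mul_add_one, contiguousSeq_two_mul, h₁, h₀, ha,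
      aSeq_two_mul_add_one, bSeq_two_mul_add_two, bSeq_two_mul_add_one, bSeq_two_mul_add_one,
      shiftNum, shiftDen]
    push_cast
    ring
  · have hY₁ := contiguousSeq_two_mul α β y X (k + 1)
    have hY₂ := contiguousSeq_two_mul_add_one α β y X (k + 1)
    have ha₁ := aSeq_two_mul α β (k + 1)
    have ha₂ := aSeq_two_mul_add_one α β (k + 1)
    have hb := bSeq_two_mul_add_one (y + 2) (k + 1)
    simp only [Nat.mul_add, Nat.mul_one, add_assoc, Nat.reduceAdd] at *
    rw [hY₁, hY₂, contiguousSeq_two_mul_add_one, h₁, h₀, ha₁, ha₂, hb, bSeq_two_mul_add_two,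
      bSeq_two_mul_add_two, shiftNum, shiftDen]
    push_cast
    ring

theorem contiguousSeq_cfA (α β y : ℝ) (n : ℕ) :
    contiguousSeq α β y (cfA (aSeq α β) (bSeq (y + 2))) n =
      shiftDen α β y * cfA (aSeq α β) (bSeq y) n := by
  refine (isThreeTermSolution_contiguousSeq (isThreeTermSolution_cfA _ _)).ext
    ((isThreeTermSolution_cfA _ _).const_mul _) ?_ ?_ n
  · simp [contiguousSeq, contiguityCoeff, cfA]
  · simp only [contiguousSeq, contiguityCoeff, cfA, aSeq, bSeq, shiftNum, shiftDen, Nat.mod_succ,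
      Nat.cast_one, one_ne_zero, ↓reduceIte, zero_add]
    ring

theorem contiguousSeq_cfB (α β y : ℝ) (n : ℕ) :
    contiguousSeq α β y (cfB (aSeq α β) (bSeq (y + 2))) n =
      shiftNum α β y * cfB (aSeq α β) (bSeq y) n := by
  refine (isThreeTermSolution_contiguousSeq (isThreeTermSolution_cfB _ _)).ext
    ((isThreeTermSolution_cfB _ _).const_mul _) ?_ ?_ n
  · simp [contiguousSeq, contiguityCoeff, cfB]
  · simp only [contiguousSeq, contiguityCoeff, cfB, bSeq, shiftNum, Nat.mod_succ, Nat.cast_one,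
      one_ne_zero, ↓reduceIte, zero_add]
    ring

theorem shiftDen_mul_sub_shiftNum_mul (α β y : ℝ) (n : ℕ) :
    shiftDen α β y * cfA (aSeq α β) (bSeq y) n * cfB (aSeq α β) (bSeq (y + 2)) n -
        shiftNum α β y * cfA (aSeq α β) (bSeq (y + 2)) n * cfB (aSeq α β) (bSeq y) n =
      (-1) ^ n * (contiguityCoeff y n * ∏ i ∈ Finset.range n, aSeq α β (i + 1)) := by
  have hA := contiguousSeq_cfA α β y n
  have hB := contiguousSeq_cfB α β y n
  have hdet := cf_determinant (aSeq α β) (bSeq (y + 2)) n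
  rw [contiguousSeq] at hA hB
  linear_combination cfA (aSeq α β) (bSeq (y + 2)) n * hB -
    cfB (aSeq α β) (bSeq (y + 2)) n * hA - contiguityCoeff y n * hdet

theorem shiftDen_mul_convergent_sub_alternating (hα : α < 1) (hβ : β < 1) (hαβ : 0 < α + β)
    (hy : 0 < y) (n : ℕ) :
    0 ≤ (-1) ^ n * (shiftDen α β y * (cfA (aSeq α β) (bSeq y) n / cfB (aSeq α β) (bSeq y) n) -
      shiftNum α β y *
        (cfA (aSeq α β) (bSeq (y + 2)) n / cfB (aSeq α β) (bSeq (y + 2)) n)) := by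
  cases n with
  | zero => simp [cfB]
  | succ n =>
    have ha := aSeq_succ_pos hα hβ hαβ
    have hB := cfB_succ_pos ha (bSeq_succ_pos hy) n
    have hB' := cfB_succ_pos ha (bSeq_succ_pos (y := y + 2) (by linarith)) n
    have hcross := shiftDen_mul_sub_shiftNum_mul α β y (n + 1)
    have hdiff : shiftDen α β y *
          (cfA (aSeq α β) (bSeq y) (n + 1) / cfB (aSeq α β) (bSeq y) (n + 1)) -
        shiftNum α β y *
          (cfA (aSeq α β) (bSeq (y + 2)) (n + 1) / cfB (aSeq α β) (bSeq (y + 2)) (n + 1)) =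
        (-1) ^ (n + 1) * (contiguityCoeff y (n + 1) *
          (∏ i ∈ Finset.range (n + 1), aSeq α β (i + 1)) /
            (cfB (aSeq α β) (bSeq y) (n + 1) * cfB (aSeq α β) (bSeq (y + 2)) (n + 1))) := by
      field_simp
      linear_combination hcross
    have hcoeff : 0 ≤ contiguityCoeff y (n + 1) := contiguityCoeff_nonneg (by linarith) _
    have hP := prod_partialNumerators_pos ha (n + 1)
    rw [hdiff, ← mul_assoc, ← mul_pow, neg_one_mul, neg_neg, one_pow, one_mul]
    positivity

end Contiguity

theorem stmt16_general (α β : ℝ) (hα : α < 1) (hβ : β < 1) (hαβ : 0 < α + β)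
    (x : ℝ) (hx : 0 < x) :
    ∃ F1 F2 : ℝ, CFConvergesTo (aSeq α β) (bSeq x) F1 ∧ 0 < F1 ∧
      CFConvergesTo (aSeq α β) (bSeq (x + 2)) F2 ∧ 0 < F2 ∧
      F1 / F2 = (x + 1 - α) * (x + α + β) * (x + 1 - β) /
        ((x + 1 + α) * (x + 2 - α - β) * (x + 1 + β)) := by
  obtain ⟨F1, hF1, hF1_pos⟩ := exists_pos_cfConvergesTo_aSeq_bSeq hα hβ hαβ hx
  obtain ⟨F2, hF2, hF2_pos⟩ :=
    exists_pos_cfConvergesTo_aSeq_bSeq (y := x + 2) hα hβ hαβ (by linarith)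
  refine ⟨F1, F2, hF1, hF1_pos, hF2, hF2_pos, ?_⟩
  have hlim : shiftDen α β x * F1 - shiftNum α β x * F2 = 0 :=
    eq_zero_of_tendsto_of_alternating ((hF1.2.const_mul _).sub (hF2.2.const_mul _))
      (shiftDen_mul_convergent_sub_alternating hα hβ hαβ hx)
  have hden : shiftDen α β x ≠ 0 := (shiftDen_pos hα hβ hαβ hx).ne'
  change F1 / F2 = shiftNum α β x / shiftDen α β x
  rw [div_eq_div_iff hF2_pos.ne' hden]
  linarith

theorem stmt16 (α β : ℝ) (hα0 : 0 < α) (hα1 : α < 1) (hβ0 : 0 < β) (hβ1 : β < 1)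
    (x : ℝ) (hx : 2 < x) :
    ∃ F1 F2 : ℝ, CFConvergesTo (aSeq α β) (bSeq x) F1 ∧ 0 < F1 ∧
      CFConvergesTo (aSeq α β) (bSeq (x + 2)) F2 ∧ 0 < F2 ∧
      F1 / F2 = (x + 1 - α) * (x + α + β) * (x + 1 - β) /
        ((x + 1 + α) * (x + 2 - α - β) * (x + 1 + β)) :=
  stmt16_general α β hα1 hβ1 (add_pos hα0 hβ0) x (two_pos.trans hx)
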